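/- arXiv:2302.02493 — 3 statements merged into one kernel-verified Lean document; each statement's English description precedes it below -/
import Mathlib

section
/- Let Q be a p×p real symmetric positive semidefinite matrix, R a t×t real symmetric positive semidefinite matrix, and ω a t×p real matrix such that the matrix P := Q + ωᵀRω is positive definite. Suppose ε : ℕ → ℝᵖ and V : ℕ → ℝ satisfy V k ≥ 0 for all k and the Bellman recursion V k = (1/2)·(ε k)ᵀ P (ε k) + V (k+1) for all k. Then the sequence k ↦ ‖ε k‖² is summable and ε k → 0 as k → ∞. -/
open Matrix Filter

/-!
The Bellman recursion telescopes, so a value function bounded below bounds the partial sums of the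
stage costs. Compactness of the unit sphere bounds a positive definite form below by a multiple of
the squared norm, so summability passes from the stage costs to the squared errors.
-/

theorem exists_pos_mul_norm_pow_le_of_homogeneous {E : Type*} [NormedAddCommGroup E]
    [NormedSpace ℝ E] [ProperSpace E] {n : ℕ} (hn : n ≠ 0) {q : E → ℝ} (hq : Continuous q)
    (hsmul : ∀ a : ℝ, 0 ≤ a → ∀ x, q (a • x) = a ^ n * q x) (hpos : ∀ x, x ≠ 0 → 0 < q x) :
    ∃ c > 0, ∀ x, c * ‖x‖ ^ n ≤ q x := by
  have hzero : q 0 = 0 := by simpa [hn] using hsmul 0 le_rfl 0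
  rcases subsingleton_or_nontrivial E with _ | _
  · exact ⟨1, one_pos, fun x => by simp [Subsingleton.elim x 0, hzero, hn]⟩
  obtain ⟨y, hy, hmin⟩ := (isCompact_sphere (0 : E) 1).exists_isMinOn
    (NormedSpace.sphere_nonempty.mpr zero_le_one) hq.continuousOn
  refine ⟨q y, hpos y (ne_zero_of_mem_unit_sphere ⟨y, hy⟩), fun x => ?_⟩
  rcases eq_or_ne x 0 with rfl | hx
  · simp [hzero, hn]
  have hunit : ‖x‖⁻¹ • x ∈ Metric.sphere (0 : E) 1 := by simp [norm_smul, hx]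
  calc q y * ‖x‖ ^ n ≤ q (‖x‖⁻¹ • x) * ‖x‖ ^ n := by gcongr; exact hmin hunit
    _ = q (‖x‖ • ‖x‖⁻¹ • x) := by rw [hsmul _ (norm_nonneg x), mul_comm]
    _ = q x := by rw [smul_inv_smul₀ (norm_ne_zero_iff.mpr hx)]

theorem summable_of_add_succ_le {f V : ℕ → ℝ} (hf : ∀ k, 0 ≤ f k) (hV : BddBelow (Set.range V))
    (hfV : ∀ k, f k + V (k + 1) ≤ V k) : Summable f := by
  obtain ⟨b, hb⟩ := hV
  refine summable_of_sum_range_le (c := V 0 - b) hf fun n => ?_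
  calc ∑ k ∈ Finset.range n, f k ≤ ∑ k ∈ Finset.range n, (V k - V (k + 1)) :=
        Finset.sum_le_sum fun k _ => le_sub_iff_add_le.mpr (hfV k)
    _ = V 0 - V n := Finset.sum_range_sub' V n
    _ ≤ V 0 - b := sub_le_sub_left (hb ⟨n, rfl⟩) _

theorem tendsto_cofinite_zero_of_summable_norm_pow {ι E : Type*} [SeminormedAddCommGroup E]
    {n : ℕ} (hn : n ≠ 0) {u : ι → E} (hu : Summable fun i => ‖u i‖ ^ n) :
    Tendsto u cofinite (nhds 0) := by
  have hroot : Tendsto (fun i => (‖u i‖ ^ n) ^ (n : ℝ)⁻¹) cofinite (nhds (0 ^ (n : ℝ)⁻¹)) :=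
    hu.tendsto_cofinite_zero.rpow_const (.inr (by positivity))
  rw [tendsto_zero_iff_norm_tendsto_zero]
  simpa [Real.pow_rpow_inv_natCast, Real.zero_rpow, hn] using hroot

section DotProduct

variable {ι : Type*} [Fintype ι]

theorem norm_toLp_sq_eq_dotProduct_self (x : ι → ℝ) : ‖WithLp.toLp 2 x‖ ^ 2 = x ⬝ᵥ x := by
  simp_rw [EuclideanSpace.real_norm_sq_eq, dotProduct, sq]

theorem exists_pos_mul_dotProduct_self_le {P : Matrix ι ι ℝ}
    (hP : ∀ x, x ≠ 0 → 0 < x ⬝ᵥ P *ᵥ x) : ∃ c > 0, ∀ x, c * (x ⬝ᵥ x) ≤ x ⬝ᵥ P *ᵥ x := by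
  obtain ⟨c, hc, hcP⟩ := exists_pos_mul_norm_pow_le_of_homogeneous two_ne_zero
    (q := fun x : EuclideanSpace ℝ ι => x.ofLp ⬝ᵥ P *ᵥ x.ofLp) (by fun_prop)
    (fun a _ x => by simp [mulVec_smul, sq, mul_assoc]) (fun x hx => hP _ (by simpa using hx))
  exact ⟨c, hc, fun x => norm_toLp_sq_eq_dotProduct_self x ▸ hcP (WithLp.toLp 2 x)⟩

theorem tendsto_cofinite_zero_of_summable_dotProduct_self {κ : Type*} {u : κ → ι → ℝ}
    (hu : Summable fun k => u k ⬝ᵥ u k) : Tendsto u cofinite (nhds 0) := by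
  simp_rw [← norm_toLp_sq_eq_dotProduct_self] at hu
  exact (PiLp.continuous_ofLp 2 _).tendsto 0 |>.comp
    (tendsto_cofinite_zero_of_summable_norm_pow two_ne_zero hu)

theorem model_following_error_l2_and_tendsto_zero_general {P : Matrix ι ι ℝ}
    (hP : ∀ x, x ≠ 0 → 0 < x ⬝ᵥ P *ᵥ x) {ε : ℕ → ι → ℝ} {V : ℕ → ℝ}
    (hV : BddBelow (Set.range V))
    (hBellman : ∀ k, (1 / 2) * (ε k ⬝ᵥ P *ᵥ ε k) + V (k + 1) ≤ V k) :
    Summable (fun k => ε k ⬝ᵥ ε k) ∧ Tendsto ε atTop (nhds 0) := by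
  obtain ⟨c, hc, hcP⟩ := exists_pos_mul_dotProduct_self_le hP
  have hself_nonneg (k : ℕ) : 0 ≤ ε k ⬝ᵥ ε k := dotProduct_star_self_nonneg (ε k)
  have hscaled : Summable fun k => c / 2 * (ε k ⬝ᵥ ε k) :=
    summable_of_add_succ_le (fun k => mul_nonneg (by positivity) (hself_nonneg k)) hV
      fun k => by linarith [hcP (ε k), hBellman k]
  have hself : Summable fun k => ε k ⬝ᵥ ε k := (summable_mul_left_iff (by positivity)).mp hscaled
  exact ⟨hself, Nat.cofinite_eq_atTop ▸ tendsto_cofinite_zero_of_summable_dotProduct_self hself⟩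

end DotProduct

/-- core of Lemma 1: if the value function `V` is nonnegative and
satisfies the Bellman recursion `V k = (1/2) εₖᵀ P εₖ + V (k+1)` with
`P = Q + ωᵀ R ω` positive definite, then the squared Euclidean norms `‖εₖ‖² = εₖ ⬝ᵥ εₖ`
form a summable sequence and `εₖ → 0`. -/
theorem model_following_error_l2_and_tendsto_zero
    (p t : ℕ) (Q : Matrix (Fin p) (Fin p) ℝ) (R : Matrix (Fin t) (Fin t) ℝ)
    (ω : Matrix (Fin t) (Fin p) ℝ)
    (hQsymm : Q.IsSymm) (hQ : Q.PosSemidef)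
    (hRsymm : R.IsSymm) (hR : R.PosSemidef)
    (P : Matrix (Fin p) (Fin p) ℝ) (hP : P = Q + ωᵀ * R * ω)
    (hPpd : P.PosDef)
    (ε : ℕ → Fin p → ℝ) (V : ℕ → ℝ)
    (hVnonneg : ∀ k, 0 ≤ V k)
    (hBellman : ∀ k, V k = (1 / 2) * (ε k ⬝ᵥ P.mulVec (ε k)) + V (k + 1)) :
    Summable (fun k => ε k ⬝ᵥ ε k) ∧ Tendsto ε atTop (nhds 0) :=
  model_following_error_l2_and_tendsto_zero_general
    (fun _ hx => hPpd.dotProduct_mulVec_pos hx) ⟨0, Set.forall_mem_range.mpr hVnonneg⟩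
    fun k => (hBellman k).ge
end

section
/- Fix q ∈ ℕ and real constants η > 0 and δ with 0 ≤ δ ≤ 2. Let z : ℕ → ℝ^q be a sequence of nonzero vectors and for each k define M_k := I − (δ/(η + ‖z k‖²))·(z k)(z k)ᵀ. Let e : ℕ → ℝ^q satisfy e (k+1) = M_k · (e k) for all k. Then ‖e k‖ ≤ ‖e 0‖ for every k; that is, the weight-error sequence remains bounded by its initial value. -/
open Matrix

section InnerProductSpace

variable {𝕜 E : Type*} [RCLike 𝕜] [SeminormedAddCommGroup E] [InnerProductSpace 𝕜 E]

theorem norm_sub_smul_inner_smul_sq (c : ℝ) (z e : E) :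
    ‖e - (c : 𝕜) • inner 𝕜 z e • z‖ ^ 2 =
      ‖e‖ ^ 2 - c * (2 - c * ‖z‖ ^ 2) * ‖inner 𝕜 z e‖ ^ 2 := by
  have hcross : RCLike.re (inner 𝕜 e ((c : 𝕜) • inner 𝕜 z e • z)) = c * ‖inner 𝕜 z e‖ ^ 2 := by
    rw [inner_smul_right, inner_smul_right, RCLike.re_ofReal_mul, inner_mul_symm_re_eq_norm,
      norm_mul, norm_inner_symm e z, sq]
  rw [norm_sub_sq (𝕜 := 𝕜), hcross, norm_smul, norm_smul, RCLike.norm_ofReal, mul_pow, mul_pow,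
    sq_abs]
  ring

theorem norm_sub_smul_inner_smul_le {c : ℝ} {z : E} (hc : 0 ≤ c) (hcz : c * ‖z‖ ^ 2 ≤ 2) (e : E) :
    ‖e - (c : 𝕜) • inner 𝕜 z e • z‖ ≤ ‖e‖ := by
  have hdecrease : 0 ≤ c * (2 - c * ‖z‖ ^ 2) * ‖inner 𝕜 z e‖ ^ 2 :=
    mul_nonneg (mul_nonneg hc (sub_nonneg.2 hcz)) (sq_nonneg _)
  rw [← sq_le_sq₀ (norm_nonneg _) (norm_nonneg _), norm_sub_smul_inner_smul_sq]
  exact sub_le_self _ hdecrease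

theorem kaczmarz_error_dynamics_bounded_general {η δ : ℕ → ℝ} (hη : ∀ k, 0 < η k)
    (hδ0 : ∀ k, 0 ≤ δ k) (hδ2 : ∀ k, δ k ≤ 2) {z e : ℕ → E}
    (he : ∀ k, e (k + 1) =
      e k - ((δ k / (η k + ‖z k‖ ^ 2) : ℝ) : 𝕜) • inner 𝕜 (z k) (e k) • z k) :
    Antitone fun k ↦ ‖e k‖ := by
  refine antitone_nat_of_succ_le fun k ↦ ?_
  have hdenom : 0 < η k + ‖z k‖ ^ 2 := add_pos_of_pos_of_nonneg (hη k) (sq_nonneg _)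
  have hgain : δ k / (η k + ‖z k‖ ^ 2) * ‖z k‖ ^ 2 ≤ 2 :=
    calc δ k / (η k + ‖z k‖ ^ 2) * ‖z k‖ ^ 2
      _ ≤ δ k / (η k + ‖z k‖ ^ 2) * (η k + ‖z k‖ ^ 2) :=
        mul_le_mul_of_nonneg_left (le_add_of_nonneg_left (hη k).le)
          (div_nonneg (hδ0 k) hdenom.le)
      _ = δ k := div_mul_cancel₀ _ hdenom.ne'
      _ ≤ 2 := hδ2 k
  rw [he k]
  exact norm_sub_smul_inner_smul_le (div_nonneg (hδ0 k) hdenom.le) hgain (e k)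

end InnerProductSpace

theorem vecMulVec_star_mulVec_eq_inner_smul {𝕜 m n : Type*} [RCLike 𝕜] [Fintype n]
    (x : m → 𝕜) (y v : EuclideanSpace 𝕜 n) :
    vecMulVec x (star y) *ᵥ v = inner 𝕜 y v • x := by
  rw [vecMulVec_mulVec, op_smul_eq_smul, EuclideanSpace.inner_eq_star_dotProduct,
    dotProduct_comm]

theorem one_sub_smul_vecMulVec_star_mulVec {𝕜 n : Type*} [RCLike 𝕜] [Fintype n] [DecidableEq n]
    (c : 𝕜) (x y v : EuclideanSpace 𝕜 n) :
    (1 - c • vecMulVec x (star y)) *ᵥ v = (v - c • inner 𝕜 y v • x).ofLp := by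
  rw [sub_mulVec, one_mulVec, smul_mulVec, vecMulVec_star_mulVec_eq_inner_smul, WithLp.ofLp_sub,
    WithLp.ofLp_smul, WithLp.ofLp_smul]

/-- Lemma 2, boundedness of weight errors: for `η > 0`, `0 ≤ δ ≤ 2`,
a sequence of nonzero vectors `z k`, and the error dynamics
`e (k+1) = (I − (δ/(η + ‖z k‖²)) (z k)(z k)ᵀ) e k`, the Euclidean norm of the
weight-error sequence never exceeds its initial value. -/
theorem kaczmarz_error_dynamics_bounded
    (q : ℕ) (η δ : ℝ) (hη : 0 < η) (hδ0 : 0 ≤ δ) (hδ2 : δ ≤ 2)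
    (z : ℕ → EuclideanSpace ℝ (Fin q)) (hz : ∀ k, z k ≠ 0)
    (M : ℕ → Matrix (Fin q) (Fin q) ℝ)
    (hM : ∀ k, M k = 1 - (δ / (η + ‖z k‖ ^ 2)) • Matrix.vecMulVec (z k) (z k))
    (e : ℕ → EuclideanSpace ℝ (Fin q))
    (he : ∀ k, (e (k + 1) : Fin q → ℝ) = (M k).mulVec (e k)) :
    ∀ k, ‖e k‖ ≤ ‖e 0‖ := by
  have hstep (k : ℕ) : e (k + 1) = e k - (δ / (η + ‖z k‖ ^ 2)) • inner ℝ (z k) (e k) • z k :=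
    WithLp.ofLp_injective 2 <| by
      rw [he k, hM k, ← one_sub_smul_vecMulVec_star_mulVec, star_trivial]
  exact fun k ↦ kaczmarz_error_dynamics_bounded_general (𝕜 := ℝ) (fun _ ↦ hη) (fun _ ↦ hδ0)
    (fun _ ↦ hδ2) hstep k.zero_le
end

section
/- Fix t, n ∈ ℕ, a nonzero vector ε ∈ ℝⁿ, a vector μ_d ∈ ℝᵗ, and a t×n real matrix Ω_prev. Define Ω_star := Ω_prev − (1/‖ε‖²)·(Ω_prev·ε − μ_d)·εᵀ, where (Ω_prev·ε − μ_d)·εᵀ denotes the outer product. Then Ω_star·ε = μ_d, and for every t×n real matrix Ω with Ω·ε = μ_d one has ‖Ω_star − Ω_prev‖_F ≤ ‖Ω − Ω_prev‖_F in the Frobenius norm, with equality if and only if Ω = Ω_star; that is, Ω_star is the unique Frobenius-norm-closest matrix to Ω_prev satisfying the constraint Ω·ε = μ_d. -/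
open Matrix

attribute [local instance] Matrix.frobeniusNormedAddCommGroup

/-!
The correction `Ωstar - Ωprev` has the form `w εᴴ`, while the difference `D` of two feasible
matrices satisfies `D ε = 0`. Hence `D (w εᴴ)ᴴ = (D ε) wᴴ = 0`, so the two are Frobenius-orthogonal
and Pythagoras gives `‖Ω - Ωprev‖² = ‖Ω - Ωstar‖² + ‖Ωstar - Ωprev‖²` for every feasible `Ω`.
-/

theorem norm_sub_le_and_eq_iff_of_norm_sub_sq_eq_add {E : Type*} [NormedAddCommGroup E] {x p u : E}
    (pythagoras : ‖x - u‖ ^ 2 = ‖x - p‖ ^ 2 + ‖p - u‖ ^ 2) :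
    ‖p - u‖ ≤ ‖x - u‖ ∧ (‖p - u‖ = ‖x - u‖ ↔ x = p) := by
  refine ⟨?_, fun heq => ?_, fun hxp => by rw [hxp]⟩
  · refine (sq_le_sq₀ (norm_nonneg _) (norm_nonneg _)).mp ?_
    rw [pythagoras]
    exact le_add_of_nonneg_left (sq_nonneg _)
  · have hdist : ‖x - p‖ ^ 2 = 0 := by rwa [heq, right_eq_add] at pythagoras
    exact sub_eq_zero.mp (norm_eq_zero.mp (sq_eq_zero_iff.mp hdist))

theorem mul_conjTranspose_vecMulVec_star_eq_zero {l m n R : Type*} [Fintype n]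
    [NonUnitalSemiring R] [StarRing R] {A : Matrix l n R} {v : n → R} (hAv : A *ᵥ v = 0)
    (w : m → R) : A * (vecMulVec w (star v))ᴴ = 0 := by
  rw [conjTranspose_vecMulVec, star_star, mul_vecMulVec, hAv, zero_vecMulVec]

section RCLike

variable {m n 𝕜 : Type*} [Fintype n] [RCLike 𝕜]

/-- The Kaczmarz update of the matrix `A`: for `ε ≠ 0`, its Frobenius-orthogonal projection onto
the affine space of matrices `X` with `X *ᵥ ε = b`. The row factor is conjugated so that the
formula also covers complex scalars; at `ε = 0` the convention `1 / 0 = 0` makes it return `A`. -/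
noncomputable def kaczmarzProjection (A : Matrix m n 𝕜) (ε : EuclideanSpace 𝕜 n) (b : m → 𝕜) :
    Matrix m n 𝕜 :=
  A - (1 / ‖ε‖ ^ 2) • vecMulVec (A *ᵥ ε - b) (star ε)

theorem kaczmarzProjection_mulVec (A : Matrix m n 𝕜) {ε : EuclideanSpace 𝕜 n} (hε : ε ≠ 0)
    (b : m → 𝕜) : kaczmarzProjection A ε b *ᵥ ε = b := by
  have hdot : star ε.ofLp ⬝ᵥ ε = ((‖ε‖ ^ 2 : ℝ) : 𝕜) := by
    rw [dotProduct_comm, ← EuclideanSpace.inner_eq_star_dotProduct, inner_self_eq_norm_sq_to_K,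
      RCLike.ofReal_pow]
  have hcorrection : (1 / ‖ε‖ ^ 2) • (vecMulVec (A *ᵥ ε - b) (star ε) *ᵥ ε) = A *ᵥ ε - b := by
    rw [vecMulVec_mulVec, hdot, op_smul_eq_smul, ← RCLike.real_smul_eq_coe_smul, smul_smul,
      one_div_mul_cancel (pow_ne_zero 2 (norm_ne_zero_iff.mpr hε)), one_smul]
  rw [kaczmarzProjection, sub_mulVec, smul_mulVec, hcorrection, sub_sub_cancel]

theorem kaczmarzProjection_sub_self (A : Matrix m n 𝕜) (ε : EuclideanSpace 𝕜 n) (b : m → 𝕜) :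
    kaczmarzProjection A ε b - A = vecMulVec ((1 / ‖ε‖ ^ 2) • (b - A *ᵥ ε)) (star ε) := by
  rw [kaczmarzProjection, sub_sub_cancel_left, ← smul_neg, ← neg_vecMulVec, neg_sub,
    smul_vecMulVec]

variable [Fintype m]

theorem frobenius_norm_sq_eq_re_trace_mul_conjTranspose (A : Matrix m n 𝕜) :
    ‖A‖ ^ 2 = RCLike.re (A * Aᴴ).trace := by
  have hsum : ‖A‖ ^ 2 = ∑ i, ∑ j, ‖A i j‖ ^ 2 := by
    rw [frobenius_norm_def, ← Real.sqrt_eq_rpow, Real.sq_sqrt (by positivity)]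
    simp only [Real.rpow_two]
  simp only [hsum, trace, diag_apply, mul_apply, conjTranspose_apply, map_sum, RCLike.star_def,
    RCLike.mul_conj, ← RCLike.ofReal_pow, RCLike.ofReal_re]

theorem frobenius_norm_add_sq_of_mul_conjTranspose_eq_zero {A B : Matrix m n 𝕜}
    (hAB : A * Bᴴ = 0) : ‖A + B‖ ^ 2 = ‖A‖ ^ 2 + ‖B‖ ^ 2 := by
  have hBA : B * Aᴴ = 0 := by simpa using congrArg conjTranspose hAB
  simp only [frobenius_norm_sq_eq_re_trace_mul_conjTranspose, conjTranspose_add, Matrix.add_mul,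
    Matrix.mul_add, hAB, hBA, add_zero, zero_add, trace_add, map_add]

theorem norm_sub_sq_eq_add_kaczmarzProjection (A : Matrix m n 𝕜) {ε : EuclideanSpace 𝕜 n}
    (hε : ε ≠ 0) {b : m → 𝕜} {X : Matrix m n 𝕜} (hX : X *ᵥ ε = b) :
    ‖X - A‖ ^ 2 =
      ‖X - kaczmarzProjection A ε b‖ ^ 2 + ‖kaczmarzProjection A ε b - A‖ ^ 2 := by
  have hker : (X - kaczmarzProjection A ε b) *ᵥ ε = 0 := by
    rw [sub_mulVec, hX, kaczmarzProjection_mulVec A hε, sub_self]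
  have horth : (X - kaczmarzProjection A ε b) * (kaczmarzProjection A ε b - A)ᴴ = 0 := by
    rw [kaczmarzProjection_sub_self]
    exact mul_conjTranspose_vecMulVec_star_eq_zero hker _
  simpa only [sub_add_sub_cancel] using frobenius_norm_add_sq_of_mul_conjTranspose_eq_zero horth

theorem actor_kaczmarz_projection_optimal_general (A : Matrix m n 𝕜) {ε : EuclideanSpace 𝕜 n}
    (hε : ε ≠ 0) (b : m → 𝕜) :
    kaczmarzProjection A ε b *ᵥ ε = b ∧
      ∀ X : Matrix m n 𝕜, X *ᵥ ε = b →
        ‖kaczmarzProjection A ε b - A‖ ≤ ‖X - A‖ ∧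
          (‖kaczmarzProjection A ε b - A‖ = ‖X - A‖ ↔ X = kaczmarzProjection A ε b) :=
  ⟨kaczmarzProjection_mulVec A hε b, fun _ hX =>
    norm_sub_le_and_eq_iff_of_norm_sub_sq_eq_add (norm_sub_sq_eq_add_kaczmarzProjection A hε hX)⟩

end RCLike

/-- Kaczmarz projection for the actor, Section IV: for `ε ≠ 0`,
`Ω_star = Ω_prev − (1/‖ε‖²)(Ω_prev ε − μ_d) εᵀ` satisfies the constraint
`Ω_star ε = μ_d` and is the unique Frobenius-norm-closest matrix to `Ω_prev` among all
matrices `Ω` with `Ω ε = μ_d`.  (The norm `‖·‖` on matrices here is the Frobenius norm,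
via the local instance above.) -/
theorem actor_kaczmarz_projection_optimal
    (t n : ℕ) (ε : EuclideanSpace ℝ (Fin n)) (hε : ε ≠ 0)
    (μd : Fin t → ℝ) (Ωprev : Matrix (Fin t) (Fin n) ℝ)
    (Ωstar : Matrix (Fin t) (Fin n) ℝ)
    (hstar : Ωstar = Ωprev - (1 / ‖ε‖ ^ 2) • Matrix.vecMulVec (Ωprev.mulVec ε - μd) ε) :
    Ωstar.mulVec ε = μd ∧
      ∀ Ω : Matrix (Fin t) (Fin n) ℝ, Ω.mulVec ε = μd →
        ‖Ωstar - Ωprev‖ ≤ ‖Ω - Ωprev‖ ∧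
          (‖Ωstar - Ωprev‖ = ‖Ω - Ωprev‖ ↔ Ω = Ωstar) := by
  obtain rfl : Ωstar = kaczmarzProjection Ωprev ε μd := by
    rw [hstar, kaczmarzProjection, star_trivial]
  exact actor_kaczmarz_projection_optimal_general Ωprev hε μd
end
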